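/- Let n ≥ 1, let g ∈ ℂ[x,y,z] be homogeneous of degree n, and let a, c ∈ ℂ satisfy (a·x + y)·∂x g + a·y·∂y g + c·z·∂z g = 0. Suppose there is exactly one integer k̄ with 0 ≤ k̄ ≤ n such that a·(n − k̄) + c·k̄ = 0, while a·(n − k) + c·k ≠ 0 for all other k in {0, …, n}. Then g is a scalar multiple of the monomial y^{n−k̄} z^{k̄}. -/

import Mathlib

/-!
The derivation `D = (a x + y) ∂x + a y ∂y + c z ∂z` splits as a diagonal part, which multiplies
`x^i y^j z^k` by `a (i + j) + c k`, plus the nilpotent part `y ∂x`, which keeps the `z`-degree `k`.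
On degree `n` the diagonal weight is `a (n - k) + c k`. Comparing the coefficients of
`x^i y^(j+1) z^k` in `D g = 0` relates `g_{i,j+1,k}` to `g_{i+1,j,k}`, and the coefficient of
`x^i z^k` is just the weight times `g_{i,0,k}` (`coeff_syz_succ`, `coeff_syz_zero`).

For `k ≠ kbar` the weight is invertible, and induction on the `y`-degree kills every coefficient
(`coeff_eq_zero_of_weight_ne_zero`). For `k = kbar` the weight vanishes, so the relation reads
`(i + 1) g_{i+1,j,k} = 0` and only `i = 0` survives.
-/

open MvPolynomial

lemma coeff_X_mul_pderiv_self (i : Fin 3) (m : Fin 3 →₀ ℕ) (g : MvPolynomial (Fin 3) ℂ) :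
    coeff m (X i * pderiv i g) = m i * coeff m g := by
  rw [coeff_X_mul', coeff_pderiv]
  split_ifs with h
  · have h1 : m i ≠ 0 := by simpa using h
    have h2 : m - Finsupp.single i 1 + Finsupp.single i 1 = m :=
      Finsupp.sub_add_single_one_cancel h1
    have h3 : (((m - Finsupp.single i 1 : Fin 3 →₀ ℕ) i : ℕ) : ℂ) + 1 = m i := by
      have := DFunLike.congr_fun h2 i
      rw [Finsupp.add_apply, Finsupp.single_eq_same] at this
      exact_mod_cast this
    rw [h2, h3, mul_comm]
  · have h1 : m i = 0 := by simpa using h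
    simp [h1]

/-- The coefficient of an arbitrary monomial in `D g = 0`, with the nilpotent part `y ∂x g` left
unevaluated. -/
lemma coeff_syz {g : MvPolynomial (Fin 3) ℂ} {a c : ℂ}
    (hsyz : (C a * X 0 + X 1) * pderiv 0 g + C a * X 1 * pderiv 1 g +
      C c * X 2 * pderiv 2 g = 0) (m : Fin 3 →₀ ℕ) :
    (a * (m 0 + m 1) + c * m 2) * coeff m g + coeff m (X 1 * pderiv 0 g) = 0 := by
  have h := congrArg (coeff m) hsyz
  simp only [add_mul, mul_assoc, coeff_add, coeff_C_mul, coeff_X_mul_pderiv_self,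
    coeff_zero] at h
  linear_combination h

lemma coeff_syz_zero {g : MvPolynomial (Fin 3) ℂ} {a c : ℂ}
    (hsyz : (C a * X 0 + X 1) * pderiv 0 g + C a * X 1 * pderiv 1 g +
      C c * X 2 * pderiv 2 g = 0) {m : Fin 3 →₀ ℕ} (hm : m 1 = 0) :
    (a * (m 0 + m 1) + c * m 2) * coeff m g = 0 := by
  have h := coeff_syz hsyz m
  rwa [coeff_X_mul', if_neg (by simpa using hm), add_zero] at h

lemma coeff_syz_succ {g : MvPolynomial (Fin 3) ℂ} {a c : ℂ}
    (hsyz : (C a * X 0 + X 1) * pderiv 0 g + C a * X 1 * pderiv 1 g +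
      C c * X 2 * pderiv 2 g = 0) (m : Fin 3 →₀ ℕ) :
    (a * (m 0 + m 1 + 1) + c * m 2) * coeff (m + Finsupp.single 1 1) g +
      coeff (m + Finsupp.single 0 1) g * (m 0 + 1) = 0 := by
  have h := coeff_syz hsyz (m + Finsupp.single 1 1)
  rw [add_comm m (Finsupp.single 1 1), coeff_X_mul, coeff_pderiv,
    add_comm (Finsupp.single 1 1) m] at h
  simp only [Finsupp.add_apply, Finsupp.single_apply] at h
  simp at h
  linear_combination h

/-- Off the resonant `z`-degree all coefficients vanish, by induction on the `y`-degree `j`. -/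
lemma coeff_eq_zero_of_weight_ne_zero {g : MvPolynomial (Fin 3) ℂ} {a c : ℂ}
    (hsyz : (C a * X 0 + X 1) * pderiv 0 g + C a * X 1 * pderiv 1 g +
      C c * X 2 * pderiv 2 g = 0) (j : ℕ) :
    ∀ m : Fin 3 →₀ ℕ, m 1 = j → a * (m 0 + m 1) + c * m 2 ≠ 0 → coeff m g = 0 := by
  induction j with
  | zero =>
    intro m hm hw
    exact (mul_eq_zero.mp (coeff_syz_zero hsyz hm)).resolve_left hw
  | succ j ih =>
    intro m hm hw
    obtain ⟨p, rfl⟩ : ∃ p, m = p + Finsupp.single 1 1 :=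
      ⟨m - Finsupp.single 1 1, (Finsupp.sub_add_single_one_cancel (by omega)).symm⟩
    simp only [Finsupp.add_apply, Finsupp.single_apply] at hm hw
    simp at hm hw
    have h := coeff_syz_succ hsyz p
    -- trading a factor `y` for a factor `x` does not change the weight
    rw [ih (p + Finsupp.single 0 1) (by simp [hm])
      (fun hp => hw (by simp at hp; linear_combination hp)), zero_mul, add_zero] at h
    exact (mul_eq_zero.mp h).resolve_left fun hp => hw (by linear_combination hp)

theorem stmt_19 (n : ℕ) (hn : 1 ≤ n) (g : MvPolynomial (Fin 3) ℂ)
    (hg : g.IsHomogeneous n) (a c : ℂ) (kbar : ℕ) (hkbar : kbar ≤ n)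
    (hsyz : (C a * X 0 + X 1) * pderiv 0 g + C a * X 1 * pderiv 1 g +
      C c * X 2 * pderiv 2 g = 0)
    (hzero : a * ((n : ℂ) - (kbar : ℂ)) + c * (kbar : ℂ) = 0)
    (hnz : ∀ k : ℕ, k ≤ n → k ≠ kbar → a * ((n : ℂ) - (k : ℂ)) + c * (k : ℂ) ≠ 0) :
    ∃ lam : ℂ, g = C lam * X 1 ^ (n - kbar) * X 2 ^ kbar := by
  set e : Fin 3 →₀ ℕ := Finsupp.single 1 (n - kbar) + Finsupp.single 2 kbar with he
  have hmon : ∀ lam : ℂ, C lam * X 1 ^ (n - kbar) * X 2 ^ kbar = monomial e lam := by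
    intro lam
    rw [X_pow_eq_monomial, X_pow_eq_monomial, C_mul_monomial, monomial_mul, mul_one, mul_one]
  refine ⟨coeff e g, ?_⟩
  rw [hmon]
  ext m
  rw [coeff_monomial]
  split_ifs with hme
  · rw [hme]
  by_cases hd : m.degree = n
  swap
  · exact hg.coeff_eq_zero hd
  have hsum : m 0 + m 1 + m 2 = n := by
    rw [← hd, Finsupp.degree_eq_sum, Fin.sum_univ_three]
  have hsumC : (m 0 : ℂ) + m 1 + m 2 = n := by exact_mod_cast hsum
  by_cases hk : m 2 = kbar
  · have h0 : m 0 ≠ 0 := by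
      intro h0
      apply hme
      ext i
      fin_cases i <;> simp [he] <;> omega
    obtain ⟨p, rfl⟩ : ∃ p, m = p + Finsupp.single 0 1 :=
      ⟨m - Finsupp.single 0 1, (Finsupp.sub_add_single_one_cancel h0).symm⟩
    have h := coeff_syz_succ hsyz p
    simp at hsumC hk
    have hw : a * ((p 0 : ℂ) + p 1 + 1) + c * p 2 = 0 := by
      rw [hk] at hsumC ⊢
      linear_combination hzero + a * hsumC
    rw [hw, zero_mul, zero_add] at h
    exact (mul_eq_zero.mp h).resolve_right (Nat.cast_add_one_ne_zero (p 0))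
  · refine coeff_eq_zero_of_weight_ne_zero hsyz _ m rfl ?_
    have := hnz (m 2) (by omega) hk
    rwa [← hsumC, add_sub_cancel_right] at this
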